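/- arXiv:2205.05002 — 3 statements merged into one kernel-verified Lean document; each statement's English description precedes it below -/
import Mathlib

section
/- Let K be a finite index set and V : K → ℝ. Then the Lebesgue integral over x ∈ ℝ of (∏_{k∈K} exp(−exp(−(V(k)+x)))) · exp(−x − exp(−x)) equals 1 / (1 + ∑_{k∈K} exp(−V(k))). -/
open MeasureTheory Real

/-! In terms of `u = exp (-x)` each Gumbel distribution function is an exponential
`exp (-exp (-V k) * u)`, so the rates add up: with `S = 1 + ∑ k, exp (-V k)` the integrand is
`exp (-x) * exp (-S * u)`. Substituting `u` for `x` leaves `∫ u in (0, ∞), exp (-S * u) = 1 / S`. -/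

theorem integral_exp_smul_comp_exp {E : Type*} [NormedAddCommGroup E] [NormedSpace ℝ E]
    (g : ℝ → E) : ∫ x : ℝ, exp x • g (exp x) = ∫ u in Set.Ioi 0, g u := by
  rw [← range_exp, ← Set.image_univ,
    integral_image_eq_integral_deriv_smul_of_monotoneOn MeasurableSet.univ
      (fun x _ ↦ (hasDerivAt_exp x).hasDerivWithinAt) (exp_monotone.monotoneOn _),
    setIntegral_univ]

theorem integral_exp_neg_sub_mul_exp_neg {c : ℝ} (hc : 0 < c) :
    ∫ x : ℝ, exp (-x - c * exp (-x)) = 1 / c :=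
  calc ∫ x : ℝ, exp (-x - c * exp (-x))
    _ = ∫ x : ℝ, exp (x - c * exp x) :=
      integral_neg_eq_self (fun x ↦ exp (x - c * exp x)) volume
    _ = ∫ x : ℝ, exp x • exp (-c * exp x) := by
      simp only [smul_eq_mul, ← exp_add, neg_mul, sub_eq_add_neg]
    _ = ∫ u in Set.Ioi 0, exp (-c * u) := integral_exp_smul_comp_exp fun u ↦ exp (-c * u)
    _ = 1 / c := by
      rw [integral_exp_mul_Ioi (neg_lt_zero.mpr hc), mul_zero, exp_zero, neg_div_neg_eq]

theorem prod_exp_neg_exp_neg_add {ι : Type*} (s : Finset ι) (V : ι → ℝ) (x : ℝ) :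
    ∏ k ∈ s, exp (-exp (-(V k + x))) = exp (-((∑ k ∈ s, exp (-V k)) * exp (-x))) := by
  simp only [← exp_sum, Finset.sum_neg_distrib, neg_add, exp_add, Finset.sum_mul]

/-- The basic Gumbel integral identity underlying the multinomial logit formula:
for a finite index set `K` and `V : K → ℝ`,
`∫ x, (∏ k, exp (-exp (-(V k + x)))) * exp (-x - exp (-x)) = 1 / (1 + ∑ k, exp (-V k))`. -/
theorem gumbel_logit_integral (K : Type*) [Fintype K] (V : K → ℝ) :
    ∫ x : ℝ, (∏ k : K, Real.exp (-Real.exp (-(V k + x)))) * Real.exp (-x - Real.exp (-x))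
      = 1 / (1 + ∑ k : K, Real.exp (-(V k))) := by
  have integrand_eq (x : ℝ) :
      (∏ k, exp (-exp (-(V k + x)))) * exp (-x - exp (-x))
        = exp (-x - (1 + ∑ k, exp (-V k)) * exp (-x)) := by
    rw [prod_exp_neg_exp_neg_add, ← exp_add]
    ring_nf
  simp only [integrand_eq]
  exact integral_exp_neg_sub_mul_exp_neg (by positivity)
end

section
/- Fix a finite set of players I, for each i ∈ I a finite nonempty action set Y_i, payoff functions v_i : (∏_{j∈I} Y_j) → ℝ, and an action profile y ∈ ∏_{j∈I} Y_j. Let γ be the Gumbel probability measure on ℝ and let μ be the product measure on ∏_{i∈I} (Y_i → ℝ) in which every coordinate ε_i(a), for i ∈ I and a ∈ Y_i, is an independent copy of γ. Then μ({ε : for all i ∈ I and all y'_i ∈ Y_i, v_i(y) + ε_i(y_i) ≥ v_i(y'_i, y_{−i}) + ε_i(y'_i)}) = ∏_{i∈I} [ exp(v_i(y)) / ∑_{y'_i ∈ Y_i} exp(v_i(y'_i, y_{−i})) ]. That is, the probability that y is a pure strategy Nash equilibrium equals the product over players of multinomial logit probabilities. -/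
open MeasureTheory Real

/-!
If `ε` is Gumbel distributed then `exp (-ε)` is exponentially distributed with rate one. The
substitution `u = exp (-x)` therefore turns integrals of `exp (-x - c * exp (-x))` into
elementary exponential integrals. Conditioning on the shock `t` of the chosen alternative, the other
shocks are independent and the product of their distribution functions at shifts of `t` is
`exp (-c * exp (-t))`, where `c` is the total weight of the other alternatives relative to the
chosen one. Its Gumbel mean is `1 / (1 + c)`, which is the logit probability. A Nash equilibrium
asks for one such event per player, and these events are independent.
-/

section Conditioning

variable {ι : Type*} [Fintype ι] [DecidableEq ι] {X : ι → Type*} [∀ i, MeasurableSpace (X i)]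

theorem measurePreserving_piSplitAt (μ : ∀ i, Measure (X i)) [∀ i, SigmaFinite (μ i)] (a : ι) :
    MeasurePreserving (Equiv.piSplitAt a X) (Measure.pi μ)
      ((μ a).prod (Measure.pi fun i : {i // i ≠ a} => μ i)) := by
  -- `convert!` reconciles two instances of `Fintype {i // i = a}`.
  have h_split : MeasurePreserving (MeasurableEquiv.piEquivPiSubtypeProd X (· = a)) (Measure.pi μ)
      ((Measure.pi fun i : {i // i = a} => μ i).prod
        (Measure.pi fun i : {i // i ≠ a} => μ i)) := by
    convert! measurePreserving_piEquivPiSubtypeProd μ (· = a)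
  have h_unique := measurePreserving_piUnique fun i : {i // i = a} => μ i
  exact (h_unique.prod (.id (Measure.pi fun i : {i // i ≠ a} => μ i))).comp h_split

theorem measure_pi_forall_ne_mem (μ : ∀ i, Measure (X i)) [∀ i, SigmaFinite (μ i)] (a : ι)
    {S : ∀ i, Set (X a × X i)} (hS : ∀ i ≠ a, MeasurableSet (S i)) :
    Measure.pi μ {x | ∀ i ≠ a, (x a, x i) ∈ S i} =
      ∫⁻ t, ∏ i ∈ Finset.univ.erase a, μ i (Prod.mk t ⁻¹' S i) ∂μ a := by
  let T : Set (X a × ∀ i : {i // i ≠ a}, X i) := ⋂ i : {i // i ≠ a}, (fun p => (p.1, p.2 i)) ⁻¹' S i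
  have measurableSet_T : MeasurableSet T := by
    refine MeasurableSet.iInter fun i => (?_ : Measurable _) (hS i i.2)
    fun_prop
  have preimage_T : Equiv.piSplitAt a X ⁻¹' T = {x | ∀ i ≠ a, (x a, x i) ∈ S i} := by
    ext x
    simp [T]
  have slice_T (t : X a) :
      Prod.mk t ⁻¹' T = Set.univ.pi fun i : {i // i ≠ a} => Prod.mk t ⁻¹' S i := by
    ext y
    simp [T]
  rw [← preimage_T, (measurePreserving_piSplitAt μ a).measure_preimage
    measurableSet_T.nullMeasurableSet, Measure.prod_apply measurableSet_T]
  refine lintegral_congr fun t => ?_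
  rw [slice_T, Measure.pi_pi, Finset.prod_subtype (p := (· ≠ a)) _ (by simp)]

end Conditioning

theorem lintegral_exp_mul_Ioi {a : ℝ} (ha : a < 0) (t : ℝ) :
    ∫⁻ u in Set.Ioi t, ENNReal.ofReal (exp (a * u)) = ENNReal.ofReal (-exp (a * t) / a) := by
  rw [← integral_exp_mul_Ioi ha, ofReal_integral_eq_lintegral_ofReal
    (integrableOn_exp_mul_Ioi ha t) (.of_forall fun _ => (exp_pos _).le)]

theorem setLIntegral_exp_neg_sub_mul_exp_neg (c : ℝ) {s : Set ℝ} (hs : MeasurableSet s) :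
    ∫⁻ x in s, ENNReal.ofReal (exp (-x - c * exp (-x))) =
      ∫⁻ u in (fun x => exp (-x)) '' s, ENNReal.ofReal (exp (-c * u)) := by
  have hderiv (x : ℝ) : HasDerivAt (fun x => exp (-x)) (-exp (-x)) x := by
    simpa using (hasDerivAt_neg x).exp
  rw [lintegral_image_eq_lintegral_deriv_mul_of_antitoneOn hs
    (fun x _ => (hderiv x).hasDerivWithinAt)
    ((exp_monotone.comp_antitone fun _ _ => neg_le_neg).antitoneOn s)]
  refine lintegral_congr fun x => ?_
  rw [neg_neg, ← ENNReal.ofReal_mul (exp_pos _).le, ← exp_add, neg_mul, sub_eq_add_neg]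

theorem image_exp_neg_Iic (t : ℝ) : (fun x => exp (-x)) '' Set.Iic t = Set.Ici (exp (-t)) := by
  ext u
  constructor
  · rintro ⟨x, hx, rfl⟩
    exact exp_le_exp.2 (neg_le_neg hx)
  · intro hu
    have hu_pos : 0 < u := (exp_pos _).trans_le hu
    refine ⟨-log u, neg_le.1 ((le_log_iff_exp_le hu_pos).2 hu), ?_⟩
    simp only [neg_neg, exp_log hu_pos]

theorem range_exp_neg : Set.range (fun x : ℝ => exp (-x)) = Set.Ioi 0 :=
  (neg_surjective.range_comp exp).trans range_exp

/-- The standard Gumbel (type 1 extreme value) distribution, given by its density; it is the common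
law of the payoff shocks. -/
noncomputable def gumbelMeasure : Measure ℝ :=
  volume.withDensity fun x => ENNReal.ofReal (exp (-x - exp (-x)))

theorem gumbelMeasure_Iic (t : ℝ) :
    gumbelMeasure (Set.Iic t) = ENNReal.ofReal (exp (-exp (-t))) := by
  have h := setLIntegral_exp_neg_sub_mul_exp_neg 1 (measurableSet_Iic (a := t))
  rw [image_exp_neg_Iic, setLIntegral_congr Ioi_ae_eq_Ici.symm,
    lintegral_exp_mul_Ioi (by norm_num)] at h
  simpa only [gumbelMeasure, withDensity_apply _ measurableSet_Iic, one_mul, neg_one_mul,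
    neg_div_neg_eq, div_one] using h

theorem lintegral_exp_neg_mul_exp_neg_gumbelMeasure {c : ℝ} (hc : -1 < c) :
    ∫⁻ x, ENNReal.ofReal (exp (-c * exp (-x))) ∂gumbelMeasure = ENNReal.ofReal (1 / (1 + c)) := by
  calc ∫⁻ x, ENNReal.ofReal (exp (-c * exp (-x))) ∂gumbelMeasure
      = ∫⁻ x, ENNReal.ofReal (exp (-x - (1 + c) * exp (-x))) := by
        rw [gumbelMeasure, lintegral_withDensity_eq_lintegral_mul _ (by fun_prop) (by fun_prop)]
        refine lintegral_congr fun x => ?_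
        rw [Pi.mul_apply, ← ENNReal.ofReal_mul (exp_pos _).le, ← exp_add]
        ring_nf
    _ = ∫⁻ u in Set.Ioi 0, ENNReal.ofReal (exp (-(1 + c) * u)) := by
        rw [← setLIntegral_univ, setLIntegral_exp_neg_sub_mul_exp_neg _ MeasurableSet.univ,
          Set.image_univ, range_exp_neg]
    _ = ENNReal.ofReal (1 / (1 + c)) := by
        rw [lintegral_exp_mul_Ioi (by linarith), mul_zero, exp_zero, neg_div_neg_eq]

instance isProbabilityMeasure_gumbelMeasure : IsProbabilityMeasure gumbelMeasure where
  measure_univ := by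
    simpa using lintegral_exp_neg_mul_exp_neg_gumbelMeasure (c := 0) (by norm_num)

theorem lintegral_prod_gumbelMeasure_Iic_add {ι : Type*} (s : Finset ι) (d : ι → ℝ) :
    ∫⁻ t, ∏ i ∈ s, gumbelMeasure (Set.Iic (t + d i)) ∂gumbelMeasure =
      ENNReal.ofReal (1 / (1 + ∑ i ∈ s, exp (-d i))) := by
  have sum_nonneg : 0 ≤ ∑ i ∈ s, exp (-d i) := Finset.sum_nonneg fun _ _ => (exp_pos _).le
  rw [← lintegral_exp_neg_mul_exp_neg_gumbelMeasure (by linarith)]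
  refine lintegral_congr fun t => ?_
  simp only [gumbelMeasure_Iic]
  rw [← ENNReal.ofReal_prod_of_nonneg fun _ _ => (exp_pos _).le, ← exp_sum,
    Finset.sum_neg_distrib, neg_mul, Finset.sum_mul]
  simp only [← exp_add, neg_add_rev]

theorem one_add_sum_erase_exp_sub {ι : Type*} [DecidableEq ι] {s : Finset ι} (w : ι → ℝ) {a : ι}
    (ha : a ∈ s) :
    1 + ∑ b ∈ s.erase a, exp (w b - w a) = (∑ b ∈ s, exp (w b)) / exp (w a) := by
  rw [Finset.sum_div, ← Finset.add_sum_erase _ _ ha, div_self (exp_pos _).ne']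
  simp only [exp_sub]

theorem measure_pi_gumbelMeasure_forall_add_le {ι : Type*} [Fintype ι] (w : ι → ℝ) (a : ι) :
    Measure.pi (fun _ : ι => gumbelMeasure) {e | ∀ b, w b + e b ≤ w a + e a} =
      ENNReal.ofReal (exp (w a) / ∑ b, exp (w b)) := by
  classical
  have add_le_iff (b : ι) (e : ι → ℝ) : w b + e b ≤ w a + e a ↔ e b ≤ e a + (w a - w b) := by
    constructor <;> intro h <;> linarith
  have event_eq : {e : ι → ℝ | ∀ b, w b + e b ≤ w a + e a} =
      {e | ∀ b ≠ a, (e a, e b) ∈ {p : ℝ × ℝ | p.2 ≤ p.1 + (w a - w b)}} := by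
    ext e
    refine ⟨fun h b _ => (add_le_iff b e).1 (h b), fun h b => ?_⟩
    rcases eq_or_ne b a with rfl | hb
    · exact le_rfl
    · exact (add_le_iff b e).2 (h b hb)
  rw [event_eq, measure_pi_forall_ne_mem _ a
    fun b _ => measurableSet_le measurable_snd (by fun_prop)]
  calc ∫⁻ t, ∏ b ∈ Finset.univ.erase a, gumbelMeasure (Set.Iic (t + (w a - w b))) ∂gumbelMeasure
      = ENNReal.ofReal (1 / (1 + ∑ b ∈ Finset.univ.erase a, exp (w b - w a))) := by
        simp only [lintegral_prod_gumbelMeasure_Iic_add, neg_sub]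
    _ = ENNReal.ofReal (exp (w a) / ∑ b, exp (w b)) := by
        rw [one_add_sum_erase_exp_sub w (Finset.mem_univ a), one_div_div]

/-- The probability, under i.i.d. Gumbel action-specific shocks, that the action profile `y`
is a pure strategy Nash equilibrium of the additively separable game equals the product over
players of multinomial logit probabilities. -/
theorem nash_probability_logit (I : Type*) [Fintype I] [DecidableEq I]
    (Y : I → Type*) [∀ i, Fintype (Y i)] [∀ i, Nonempty (Y i)]
    (v : ∀ i, (∀ j, Y j) → ℝ) (y : ∀ j, Y j)
    (γ : Measure ℝ) [IsProbabilityMeasure γ]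
    (hγ : γ = volume.withDensity fun x => ENNReal.ofReal (Real.exp (-x - Real.exp (-x)))) :
    Measure.pi (fun i : I => Measure.pi (fun _ : Y i => γ))
        {ε : ∀ i, Y i → ℝ |
          ∀ i, ∀ y'i : Y i,
            v i (Function.update y i y'i) + ε i y'i ≤ v i y + ε i (y i)}
      = ENNReal.ofReal
          (∏ i : I,
            Real.exp (v i y) / ∑ y'i : Y i, Real.exp (v i (Function.update y i y'i))) := by
  obtain rfl : γ = gumbelMeasure := hγ
  have event_eq_pi : {ε : ∀ i, Y i → ℝ | ∀ i, ∀ y'i : Y i,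
        v i (Function.update y i y'i) + ε i y'i ≤ v i y + ε i (y i)} =
      Set.univ.pi fun i => {e : Y i → ℝ | ∀ b,
        v i (Function.update y i b) + e b ≤ v i (Function.update y i (y i)) + e (y i)} := by
    ext ε
    simp only [Function.update_eq_self, Set.mem_ofPred_eq, Set.mem_univ_pi]
  rw [event_eq_pi, Measure.pi_pi, ENNReal.ofReal_prod_of_nonneg fun i _ => by positivity]
  refine Finset.prod_congr rfl fun i _ => ?_
  rw [measure_pi_gumbelMeasure_forall_add_le (fun b => v i (Function.update y i b)) (y i),
    Function.update_eq_self]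
end

section
/- Fix a finite set of players I, for each i ∈ I a finite nonempty action set Y_i, a finite index set X of constraints, and for each (y, x) ∈ (∏_{j∈I} Y_j) × X a constant c_{y,x} ∈ ℝ. Suppose that for each player i, each action profile z, and each x ∈ X, the payoff index v_i(z, x; θ) is an affine function of θ ∈ ℝ^d. Then the set Θ_I^{ABJ} = { θ ∈ ℝ^d : for all action profiles y and all x ∈ X, c_{y,x} ≤ ∑_{i∈I} [ v_i(y, x; θ) − log( ∑_{y'_i ∈ Y_i} exp( v_i(y'_i, y_{−i}, x; θ) ) ) ] } is a convex subset of ℝ^d. -/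
/-!
For a fixed action profile, the log generalized likelihood is a concave function of the vector of
all payoff indices: each player contributes a linear form minus a log-sum-exp of linear forms.
Composing with the affine map that sends `θ` to the payoff indices keeps it concave, so the
identified set is an intersection of superlevel sets of concave functions.

Log-sum-exp is convex because `log (∑ exp u_k) ≤ r` means `∑ exp (u_k - r) ≤ 1`, so its epigraph is
a sublevel set of a convex function of `(u, r)`.
-/

section FinsetSum

variable {𝕜 E β ι : Type*} [Semiring 𝕜] [PartialOrder 𝕜] [AddCommMonoid E] [AddCommMonoid β]
  [PartialOrder β] [IsOrderedAddMonoid β] [SMul 𝕜 E] [Module 𝕜 β]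
  {s : Set E} {t : Finset ι} {f : ι → E → β}

theorem convexOn_finset_sum (hs : Convex 𝕜 s) (hf : ∀ k ∈ t, ConvexOn 𝕜 s (f k)) :
    ConvexOn 𝕜 s fun x ↦ ∑ k ∈ t, f k x := by
  simp only [← Finset.sum_apply]
  exact Finset.sum_induction f (ConvexOn 𝕜 s) (fun _ _ ↦ ConvexOn.add) (convexOn_const 0 hs) hf

theorem concaveOn_finset_sum (hs : Convex 𝕜 s) (hf : ∀ k ∈ t, ConcaveOn 𝕜 s (f k)) :
    ConcaveOn 𝕜 s fun x ↦ ∑ k ∈ t, f k x :=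
  convexOn_finset_sum (β := βᵒᵈ) hs hf

end FinsetSum

section LogSumExp

variable {ι : Type*} {t : Finset ι}

theorem log_sum_exp_le_iff (ht : t.Nonempty) (u : ι → ℝ) (r : ℝ) :
    Real.log (∑ k ∈ t, Real.exp (u k)) ≤ r ↔ ∑ k ∈ t, Real.exp (u k - r) ≤ 1 := by
  have hpos : 0 < ∑ k ∈ t, Real.exp (u k) := Finset.sum_pos (fun k _ ↦ Real.exp_pos (u k)) ht
  simp only [Real.exp_sub, ← Finset.sum_div]
  rw [Real.log_le_iff_le_exp hpos, div_le_one (Real.exp_pos r)]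

theorem convexOn_log_sum_exp (ht : t.Nonempty) :
    ConvexOn ℝ Set.univ fun u : ι → ℝ ↦ Real.log (∑ k ∈ t, Real.exp (u k)) := by
  have hexp : ConvexOn ℝ Set.univ fun p : (ι → ℝ) × ℝ ↦ ∑ k ∈ t, Real.exp (p.1 k - p.2) :=
    convexOn_finset_sum convex_univ fun k _ ↦
      convexOn_exp.comp_linearMap
        (LinearMap.proj k ∘ₗ LinearMap.fst ℝ (ι → ℝ) ℝ - LinearMap.snd ℝ (ι → ℝ) ℝ)
  refine convexOn_of_convex_epigraph ?_
  simpa only [log_sum_exp_le_iff ht, Set.mem_univ, true_and] using hexp.convex_le 1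

end LogSumExp

section LogLikelihood

variable {I : Type*} [Fintype I] [DecidableEq I] {Y : I → Type*} [∀ i, Fintype (Y i)]

/-- The logarithm of the product-of-logits generalized likelihood `L(y|x;θ)`, as a function of the
payoff indices at a fixed `(x, θ)`: `v i z` stands for `v_i(z, x; θ)`, indexed by the player `i` and
the whole action profile `z`. -/
noncomputable def logLikelihood (y : ∀ j, Y j) (v : I → (∀ j, Y j) → ℝ) : ℝ :=
  ∑ i, (v i y - Real.log (∑ y'i : Y i, Real.exp (v i (Function.update y i y'i))))

theorem concaveOn_logLikelihood (y : ∀ j, Y j) :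
    ConcaveOn ℝ Set.univ (logLikelihood y) := by
  refine concaveOn_finset_sum convex_univ fun i _ ↦ ?_
  have : Nonempty (Y i) := ⟨y i⟩
  let payoff (z : ∀ j, Y j) : (I → (∀ j, Y j) → ℝ) →ₗ[ℝ] ℝ :=
    LinearMap.proj z ∘ₗ LinearMap.proj i
  have hlse := (convexOn_log_sum_exp Finset.univ_nonempty).comp_linearMap
    (LinearMap.pi fun y'i : Y i ↦ payoff (Function.update y i y'i))
  exact ((payoff y).concaveOn convex_univ).sub hlse

theorem ABJ_identified_set_convex_general {X E : Type*} [AddCommGroup E] [Module ℝ E]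
    (c : (∀ j, Y j) → X → ℝ) (v : X → E →ᵃ[ℝ] (I → (∀ j, Y j) → ℝ)) :
    Convex ℝ {θ : E | ∀ y x, c y x ≤ logLikelihood y (v x θ)} := by
  simp only [Set.ofPred_forall]
  refine convex_iInter₂ fun y x ↦ ?_
  simpa only [Set.preimage_univ, Set.mem_univ, true_and, Function.comp_apply] using
    ((concaveOn_logLikelihood y).comp_affineMap (v x)).convex_ge (c y x)

end LogLikelihood

/-- When the payoff indices are affine in `θ`, the ABJ identified set
`{θ : ∀ y x, c_{y,x} ≤ ∑ i (v i y x θ - log ∑_{y'i} exp (v i (y'i, y_{-i}) x θ))}`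
is a convex subset of `ℝ^d`. -/
theorem ABJ_identified_set_convex (I : Type*) [Fintype I] [DecidableEq I]
    (Y : I → Type*) [∀ i, Fintype (Y i)] [∀ i, Nonempty (Y i)]
    (X : Type*) [Fintype X] (d : ℕ)
    (c : (∀ j, Y j) → X → ℝ)
    (coef : ∀ i, (∀ j, Y j) → X → (Fin d → ℝ)) (cons : ∀ i, (∀ j, Y j) → X → ℝ)
    (v : ∀ i, (∀ j, Y j) → X → (Fin d → ℝ) → ℝ)
    (hv : ∀ i z x θ, v i z x θ = (∑ t : Fin d, coef i z x t * θ t) + cons i z x) :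
    Convex ℝ
      {θ : Fin d → ℝ |
        ∀ (y : ∀ j, Y j) (x : X),
          c y x ≤
            ∑ i : I,
              (v i y x θ -
                Real.log
                  (∑ y'i : Y i, Real.exp (v i (Function.update y i y'i) x θ)))} := by
  let payoffs (x : X) : (Fin d → ℝ) →ᵃ[ℝ] (I → (∀ j, Y j) → ℝ) :=
    AffineMap.pi fun i ↦ AffineMap.pi fun z ↦
      (dotProductBilin ℝ ℝ (coef i z x)).toAffineMap + AffineMap.const ℝ (Fin d → ℝ) (cons i z x)
  have hpayoffs : ∀ i z x θ, v i z x θ = payoffs x θ i z := hv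
  simp only [hpayoffs]
  exact ABJ_identified_set_convex_general c payoffs
end
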